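/- Let k ≥ 0 be an integer and let φ: (0,1) → [0,∞) be C^k such that |(1−ℰ)^k φ^{(k)}(ℰ)| ≤ C(1−ℰ)^{−1+ε} for some constants C, ε > 0 for all ℰ in a neighborhood of 1. For i > −1 and η > 0 define g_i(η) = ∫_{e^{−η}}^{1} φ(ℰ)·[(ℰ² − e^{−2η})/2]^i dℰ. Then: (i) for every i ≥ 0, g_i is C^{k+1} on (0,∞), with g_i'(η) = i·e^{−2η}·g_{i−1}(η) when i > 0 and g_0'(η) = e^{−η}·φ(e^{−η}); (ii) for −1 < i < 0, g_i is C^k on (0,∞), and if in addition the function ℰ ↦ (1−ℰ)^k φ^{(k)}(ℰ) is Hölder continuous on (0,1) with exponent α > −i, then g_i is C^{k+1} on (0,∞). -/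

import Mathlib

open Filter Set

/-- The kinetic integrals `g_i(η) = ∫_{e^{-η}}^1 φ(ℰ) [(ℰ² - e^{-2η})/2]^i dℰ`. -/
noncomputable def gfun (φ : ℝ → ℝ) (i η : ℝ) : ℝ :=
  ∫ E in Real.exp (-η)..1, φ E * (((E ^ 2 - Real.exp (-2 * η)) / 2) ^ i)

/-!
The substitution `w = ℰ²` turns `g_i(η)` into a Riemann–Liouville integral of order `i + 1` of
`sqDensity φ`, evaluated at `u = e^{-2η}`. The part of that integral away from `u` has a smooth
kernel, so only the regularity of the density near `u` matters. Each derivative of the density can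
be moved out of the integral by parts, which reduces everything to `k = 0`. There the integral is a
window integral of translates, and its derivative in Marchaud form converges as soon as the
increments of the density are `O(t^α)` with `α + i > 0`. The growth bound at `ℰ = 1` enters only
through the integrability of `φ` there: integrating it `k` times gives
`φ(ℰ) = O((1 - ℰ)^e)` for some `e > -1`.
-/

open MeasureTheory Topology
open scoped NNReal

section WindowIntegral

variable {F : ℝ → ℝ} {i L M C α : ℝ}

/-- The window transform `u ↦ ∫_u^{u+L} F(w) (w - u)^i dw`, written in the variable `t = w - u` so
that the parameter `u` only enters through translates of `F`. -/
noncomputable def windowIntegral (i L : ℝ) (F : ℝ → ℝ) (u : ℝ) : ℝ :=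
  ∫ t in 0..L, F (u + t) * t ^ i

/-- The Marchaud form of the derivative of `windowIntegral i L F`: the increments of `F`
compensate the singularity of `t ^ (i - 1)` when `i ≤ 0`. -/
noncomputable def marchaudDeriv (i L : ℝ) (F : ℝ → ℝ) (u : ℝ) : ℝ :=
  (F (u + L) - F u) * L ^ i - i * ∫ t in 0..L, (F (u + t) - F u) * t ^ (i - 1)

lemma intervalIntegrable_translate_mul_rpow (hF : Continuous F) (hi : -1 < i) (u : ℝ) :
    IntervalIntegrable (fun t => F (u + t) * t ^ i) volume 0 L :=
  (intervalIntegral.intervalIntegrable_rpow' hi).continuousOn_mul (by fun_prop)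

lemma continuous_windowIntegral (hF : Continuous F) (hM : ∀ x, |F x| ≤ M) (hi : -1 < i)
    (hL : 0 ≤ L) : Continuous (windowIntegral i L F) := by
  refine intervalIntegral.continuous_of_dominated_interval (bound := fun t => M * t ^ i)
    (fun u => ?_) (fun u => .of_forall fun t ht => ?_)
    ((intervalIntegral.intervalIntegrable_rpow' hi).const_mul M)
    (.of_forall fun t _ => by fun_prop)
  · exact (by fun_prop : Measurable fun t => F (u + t) * t ^ i).aestronglyMeasurable
  · rw [uIoc_of_le hL] at ht
    have h_nonneg : 0 ≤ t ^ i := Real.rpow_nonneg ht.1.le i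
    rw [Real.norm_eq_abs, abs_mul, abs_of_nonneg h_nonneg]
    exact mul_le_mul_of_nonneg_right (hM _) h_nonneg

lemma norm_increment_mul_rpow_le {u t : ℝ} (ht : 0 < t) (h : |F (u + t) - F u| ≤ C * t ^ α) :
    ‖(F (u + t) - F u) * t ^ (i - 1)‖ ≤ C * t ^ (α + i - 1) := by
  have h_nonneg : 0 ≤ t ^ (i - 1) := Real.rpow_nonneg ht.le _
  rw [Real.norm_eq_abs, abs_mul, abs_of_nonneg h_nonneg, add_sub_assoc, Real.rpow_add ht,
    ← mul_assoc]
  exact mul_le_mul_of_nonneg_right h h_nonneg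

lemma measurable_increment_mul_rpow (hF : Continuous F) (i u : ℝ) :
    Measurable fun t => (F (u + t) - F u) * t ^ i := by
  fun_prop

lemma continuous_marchaudDeriv (hF : Continuous F) (hL : 0 ≤ L) (hαi : 0 < α + i)
    (hC : ∀ u, ∀ t ∈ Ioc 0 L, |F (u + t) - F u| ≤ C * t ^ α) :
    Continuous (marchaudDeriv i L F) := by
  refine .sub (by fun_prop) (.mul continuous_const ?_)
  refine intervalIntegral.continuous_of_dominated_interval (bound := fun t => C * t ^ (α + i - 1))
    (fun u => (measurable_increment_mul_rpow hF _ u).aestronglyMeasurable)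
    (fun u => .of_forall fun t ht => ?_)
    ((intervalIntegral.intervalIntegrable_rpow' (by linarith)).const_mul C)
    (.of_forall fun t _ => by fun_prop)
  rw [uIoc_of_le hL] at ht
  exact norm_increment_mul_rpow_le ht.1 (hC u t ht)

section Primitive

variable {P : ℝ → ℝ}

lemma continuous_dslope (hP : Differentiable ℝ P) (u : ℝ) : Continuous (dslope P u) :=
  continuousOn_univ.1 <| (continuousOn_dslope univ_mem).2 ⟨hP.continuous.continuousOn, hP u⟩

lemma increment_mul_rpow_eq_dslope (P : ℝ → ℝ) (i u : ℝ) {t : ℝ} (ht : 0 < t) :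
    (P (u + t) - P u) * t ^ (i - 1) = dslope P u (u + t) * t ^ i := by
  have h_slope : P (u + t) - P u = t * dslope P u (u + t) := by
    simpa using (sub_smul_dslope P u (u + t)).symm
  rw [h_slope, Real.rpow_sub_one ht.ne']
  field_simp

lemma intervalIntegrable_increment_mul_rpow (hP : Differentiable ℝ P) (hi : -1 < i)
    (hL : 0 ≤ L) (u : ℝ) :
    IntervalIntegrable (fun t => (P (u + t) - P u) * t ^ (i - 1)) volume 0 L := by
  refine (intervalIntegrable_translate_mul_rpow (continuous_dslope hP u) hi u).congr fun t ht => ?_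
  rw [uIoc_of_le hL] at ht
  exact (increment_mul_rpow_eq_dslope P i u ht.1).symm

lemma windowIntegral_eq_marchaudDeriv (hF : Continuous F) (hP : ∀ x, HasDerivAt P (F x) x)
    (hi : -1 < i) (hL : 0 < L) : windowIntegral i L F = marchaudDeriv i L P := by
  funext u
  have hP_diff : Differentiable ℝ P := fun x => (hP x).differentiableAt
  have h_int := intervalIntegrable_translate_mul_rpow (L := L) hF hi u
  have h_int' := (intervalIntegrable_increment_mul_rpow hP_diff hi hL.le u).const_mul i
  have h_eq : ∀ t, 0 < t →
      dslope P u (u + t) * t ^ (i + 1) = (P (u + t) - P u) * t ^ i := fun t ht => by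
    simpa using (increment_mul_rpow_eq_dslope P (i + 1) u ht).symm
  have h_cont : Continuous fun t => dslope P u (u + t) * t ^ (i + 1) :=
    ((continuous_dslope hP_diff u).comp (by fun_prop)).mul
      (Real.continuous_rpow_const (by linarith))
  have h_deriv : ∀ t ∈ Ioo 0 L, HasDerivAt (fun t => dslope P u (u + t) * t ^ (i + 1))
      (F (u + t) * t ^ i + i * ((P (u + t) - P u) * t ^ (i - 1))) t := fun t ht => by
    have h := (((hP (u + t)).comp_const_add u t).sub_const (P u)).mul
      (Real.hasDerivAt_rpow_const (p := i) (Or.inl ht.1.ne'))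
    refine (h.congr_of_eventuallyEq ((eventually_gt_nhds ht.1).mono h_eq)).congr_deriv ?_
    ring
  have h_ftc := intervalIntegral.integral_eq_sub_of_hasDerivAt_of_le hL.le h_cont.continuousOn
    h_deriv (h_int.add h_int')
  rw [intervalIntegral.integral_add h_int h_int', intervalIntegral.integral_const_mul,
    Real.zero_rpow (by linarith), mul_zero, sub_zero] at h_ftc
  rw [marchaudDeriv, ← h_eq L hL, ← h_ftc, add_sub_cancel_right, windowIntegral]

end Primitive

lemma hasDerivAt_windowIntegral (hF : Continuous F) (hi : -1 < i) (hL : 0 < L) (hαi : 0 < α + i)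
    (hC : ∀ u, ∀ t ∈ Ioc 0 L, |F (u + t) - F u| ≤ C * t ^ α) (u : ℝ) :
    HasDerivAt (windowIntegral i L F) (marchaudDeriv i L F u) u := by
  obtain ⟨P, hP⟩ : ∃ P : ℝ → ℝ, ∀ x, HasDerivAt P (F x) x :=
    ⟨fun x => ∫ t in 0..x, F t, fun x => (hF.integral_hasStrictDerivAt 0 x).hasDerivAt⟩
  have hP_diff : Differentiable ℝ P := fun x => (hP x).differentiableAt
  have h_increment : ∀ x t, HasDerivAt (fun x => P (x + t) - P x) (F (x + t) - F x) x :=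
    fun x t => ((hP (x + t)).comp_add_const x t).sub (hP x)
  rw [windowIntegral_eq_marchaudDeriv hF hP hi hL]
  refine ((h_increment u L).mul_const _).sub (HasDerivAt.const_mul i ?_)
  refine (intervalIntegral.hasDerivAt_integral_of_dominated_loc_of_deriv_le
    (bound := fun t => C * t ^ (α + i - 1)) (F' := fun u t => (F (u + t) - F u) * t ^ (i - 1))
    univ_mem
    (.of_forall fun x =>
      (measurable_increment_mul_rpow hP_diff.continuous _ x).aestronglyMeasurable)
    (intervalIntegrable_increment_mul_rpow hP_diff hi hL.le u)
    (measurable_increment_mul_rpow hF _ u).aestronglyMeasurable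
    (.of_forall fun t ht x _ => ?_)
    ((intervalIntegral.intervalIntegrable_rpow' (by linarith)).const_mul C)
    (.of_forall fun t _ x _ => (h_increment x t).mul_const _)).2
  rw [uIoc_of_le hL.le] at ht
  exact norm_increment_mul_rpow_le ht.1 (hC x t ht)

lemma hasDerivAt_windowIntegral_of_pos (hF : Continuous F) (hM : ∀ x, |F x| ≤ M) (hi : 0 < i)
    (hL : 0 < L) (u : ℝ) :
    HasDerivAt (windowIntegral i L F) (F (u + L) * L ^ i - i * windowIntegral (i - 1) L F u) u := by
  have h_bound : ∀ u, ∀ t ∈ Ioc 0 L, |F (u + t) - F u| ≤ 2 * M * t ^ (0 : ℝ) := fun u t _ => by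
    rw [Real.rpow_zero, mul_one, two_mul]
    exact (abs_sub _ _).trans (add_le_add (hM _) (hM _))
  refine (hasDerivAt_windowIntegral hF (by linarith) hL (by linarith) h_bound u).congr_deriv ?_
  simp only [marchaudDeriv, windowIntegral, sub_mul]
  rw [intervalIntegral.integral_sub (intervalIntegrable_translate_mul_rpow hF (by linarith) u)
      ((intervalIntegral.intervalIntegrable_rpow' (by linarith)).const_mul _),
    intervalIntegral.integral_const_mul, integral_rpow (Or.inl (by linarith)), sub_add_cancel,
    Real.zero_rpow hi.ne']
  field_simp
  ring

end WindowIntegral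

lemma contDiffOn_succ_of_hasDerivAt {f f' : ℝ → ℝ} {s : Set ℝ} {n : ℕ} (hs : IsOpen s)
    (hf : ∀ x ∈ s, HasDerivAt f (f' x) x) (hf' : ContDiffOn ℝ n f' s) :
    ContDiffOn ℝ (n + 1) f s :=
  (contDiffOn_succ_iff_deriv_of_isOpen hs).2
    ⟨fun x hx => (hf x hx).differentiableAt.differentiableWithinAt,
      fun h => absurd h (WithTop.natCast_ne_top n), hf'.congr fun x hx => (hf x hx).deriv⟩

/-- The right-sided Riemann–Liouville fractional integral of order `i + 1` with base point `c`,
without the normalising factor `1 / Γ(i + 1)`. -/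
noncomputable def rlIntegral (i c : ℝ) (f : ℝ → ℝ) (u : ℝ) : ℝ :=
  ∫ w in u..c, f w * (w - u) ^ i

section RiemannLiouville

variable {f : ℝ → ℝ} {i a b c u : ℝ}

lemma intervalIntegrable_sub_rpow (hi : -1 < i) (u c : ℝ) :
    IntervalIntegrable (fun w => (w - u) ^ i) volume u c := by
  simpa using (intervalIntegral.intervalIntegrable_rpow' (a := 0) (b := c - u) hi).comp_sub_right u

lemma rlIntegral_eq_windowIntegral (hbc : b ≤ c) (hf : ContinuousOn f (Icc b c)) (hi : -1 < i)
    (hu : u ∈ Icc b c) :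
    rlIntegral i c f u = windowIntegral i (c - b) (IccExtend hbc ((Icc b c).domRestrict f)) u -
      f c * ((c - b) ^ (i + 1) - (c - u) ^ (i + 1)) / (i + 1) := by
  set F := IccExtend hbc ((Icc b c).domRestrict f) with hF
  have hF_cont : Continuous F := hf.domRestrict.Icc_extend'
  have h_int : ∀ x y, IntervalIntegrable (fun t => F (u + t) * t ^ i) volume x y := fun x y =>
    (intervalIntegral.intervalIntegrable_rpow' hi).continuousOn_mul (by fun_prop)
  have h_inner : ∫ t in 0..c - u, F (u + t) * t ^ i = rlIntegral i c f u := by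
    have h_shift := intervalIntegral.integral_comp_sub_right (a := u) (b := c)
      (fun t => F (u + t) * t ^ i) u
    rw [sub_self] at h_shift
    rw [← h_shift, rlIntegral]
    refine intervalIntegral.integral_congr fun w hw => ?_
    rw [uIcc_of_le hu.2] at hw
    have h_mem : w ∈ Icc b c := ⟨hu.1.trans hw.1, hw.2⟩
    simp only [add_sub_cancel, hF, IccExtend_of_mem hbc _ h_mem, domRestrict_apply]
  have h_outer : ∫ t in c - u..c - b, F (u + t) * t ^ i =
      f c * ((c - b) ^ (i + 1) - (c - u) ^ (i + 1)) / (i + 1) := by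
    rw [mul_div_assoc, ← integral_rpow (Or.inl hi), ← intervalIntegral.integral_const_mul]
    refine intervalIntegral.integral_congr fun t ht => ?_
    rw [uIcc_of_le (by linarith [hu.1])] at ht
    have h_le : c ≤ u + t := by linarith [ht.1]
    simp only [hF, IccExtend_of_right_le hbc _ h_le, domRestrict_apply]
  rw [windowIntegral, ← intervalIntegral.integral_add_adjacent_intervals (h_int 0 (c - u))
    (h_int (c - u) (c - b)), h_inner, h_outer, add_sub_cancel_right]

lemma hasDerivAt_const_sub_rpow (p : ℝ) (hu : u < c) :
    HasDerivAt (fun u => (c - u) ^ (p + 1)) (-(p + 1) * (c - u) ^ p) u := by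
  convert ((hasDerivAt_id' u).const_sub c).rpow_const (p := p + 1)
    (Or.inl (sub_pos.2 hu).ne') using 1
  rw [add_sub_cancel_right]
  ring

lemma contDiffOn_const_sub_rpow (n : ℕ) (c p : ℝ) :
    ContDiffOn ℝ n (fun u => (c - u) ^ p) (Iio c) :=
  (contDiffOn_const.sub contDiffOn_id).rpow_const_of_ne fun _ hu => (sub_pos.2 hu).ne'

lemma hasDerivAt_rlIntegral_of_windowIntegral (hbc : b ≤ c) (hf : ContinuousOn f (Icc b c))
    (hi : -1 < i) (hu : u ∈ Ioo b c) {D : ℝ}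
    (hD : HasDerivAt (windowIntegral i (c - b) (IccExtend hbc ((Icc b c).domRestrict f))) D u) :
    HasDerivAt (rlIntegral i c f) (D - f c * (c - u) ^ i) u := by
  have hi_ne : i + 1 ≠ 0 := by linarith
  have h := hD.sub ((((hasDerivAt_const_sub_rpow i hu.2).const_sub
    ((c - b) ^ (i + 1))).const_mul (f c)).div_const (i + 1))
  refine (h.congr_deriv ?_).congr_of_eventuallyEq ?_
  · field_simp
  · filter_upwards [Ioo_mem_nhds hu.1 hu.2] with v hv
    exact rlIntegral_eq_windowIntegral hbc hf hi ⟨hv.1.le, hv.2.le⟩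

lemma exists_abs_IccExtend_le (hbc : b ≤ c) (hf : ContinuousOn f (Icc b c)) :
    ∃ M, ∀ x, |IccExtend hbc ((Icc b c).domRestrict f) x| ≤ M := by
  obtain ⟨M, hM⟩ := isCompact_Icc.exists_bound_of_continuousOn hf
  exact ⟨M, fun x => hM _ (projIcc b c hbc x).2⟩

lemma continuousOn_rlIntegral (hf : ContinuousOn f (Ioc a c)) (hi : -1 < i) :
    ContinuousOn (rlIntegral i c f) (Ioo a c) := by
  intro u hu
  obtain ⟨b, hab, hbu⟩ := exists_between hu.1
  have hbc : b < c := hbu.trans hu.2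
  have hf' : ContinuousOn f (Icc b c) := hf.mono fun x hx => ⟨hab.trans_le hx.1, hx.2⟩
  obtain ⟨M, hM⟩ := exists_abs_IccExtend_le hbc.le hf'
  have h_window := continuous_windowIntegral (i := i) hf'.domRestrict.Icc_extend' hM hi
    (sub_nonneg.2 hbc.le)
  have h_correction : Continuous fun u => (c - u) ^ (i + 1) :=
    (continuous_const.sub continuous_id).rpow_const fun _ => Or.inr (by linarith)
  have h_cont := h_window.sub (((continuous_const (y := (c - b) ^ (i + 1))).sub
    h_correction).const_mul (f c) |>.div_const (i + 1))
  refine (h_cont.continuousAt.congr ?_).continuousWithinAt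
  filter_upwards [Ioo_mem_nhds hbu hu.2] with v hv
  exact (rlIntegral_eq_windowIntegral hbc.le hf' hi ⟨hv.1.le, hv.2.le⟩).symm

lemma hasDerivAt_rlIntegral_of_pos (hf : ContinuousOn f (Ioc a c)) (hi : 0 < i)
    (hu : u ∈ Ioo a c) :
    HasDerivAt (rlIntegral i c f) (-i * rlIntegral (i - 1) c f u) u := by
  obtain ⟨b, hab, hbu⟩ := exists_between hu.1
  have hbc : b < c := hbu.trans hu.2
  have hf' : ContinuousOn f (Icc b c) := hf.mono fun x hx => ⟨hab.trans_le hx.1, hx.2⟩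
  obtain ⟨M, hM⟩ := exists_abs_IccExtend_le hbc.le hf'
  have h_window := hasDerivAt_windowIntegral_of_pos hf'.domRestrict.Icc_extend' hM hi
    (sub_pos.2 hbc) u
  refine (hasDerivAt_rlIntegral_of_windowIntegral hbc.le hf' (by linarith) ⟨hbu, hu.2⟩
    h_window).congr_deriv ?_
  rw [rlIntegral_eq_windowIntegral hbc.le hf' (by linarith) ⟨hbu.le, hu.2.le⟩,
    IccExtend_of_right_le hbc.le _ (show c ≤ u + (c - b) by linarith), domRestrict_apply,
    sub_add_cancel]
  field_simp
  ring

lemma rlIntegral_eq_sub_rlIntegral_derivWithin {U : Set ℝ} (hU : IsOpen U)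
    (hf : ContDiffOn ℝ 1 f U) (hi : -1 < i) (huc : u ≤ c) (hsub : Icc u c ⊆ U) :
    rlIntegral i c f u = f c * (c - u) ^ (i + 1) / (i + 1) -
      rlIntegral (i + 1) c (derivWithin f U) u / (i + 1) := by
  have hi_ne : i + 1 ≠ 0 := by linarith
  have h_primitive : ∀ x ∈ Ioo u c,
      HasDerivAt (fun w => (w - u) ^ (i + 1) / (i + 1)) ((x - u) ^ i) x := fun x hx => by
    refine ((((hasDerivAt_id' x).sub_const u).rpow_const (p := i + 1)
      (Or.inl (sub_pos.2 hx.1).ne')).div_const (i + 1)).congr_deriv ?_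
    rw [add_sub_cancel_right]
    field_simp
  have h_primitive_cont : Continuous fun w : ℝ => (w - u) ^ (i + 1) / (i + 1) :=
    ((continuous_id.sub continuous_const).rpow_const fun _ => Or.inr (by linarith)).div_const _
  have h_deriv_int : IntervalIntegrable (derivWithin f U) volume u c := by
    refine ContinuousOn.intervalIntegrable ?_
    rw [uIcc_of_le huc]
    exact (hf.continuousOn_derivWithin hU.uniqueDiffOn le_rfl).mono hsub
  have h_parts := intervalIntegral.integral_mul_deriv_eq_deriv_mul_of_hasDerivAt
    (u := f) (u' := derivWithin f U) (by rw [uIcc_of_le huc]; exact hf.continuousOn.mono hsub)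
    h_primitive_cont.continuousOn
    (fun x hx => ?_) (by rwa [min_eq_left huc, max_eq_right huc]) h_deriv_int
    (intervalIntegrable_sub_rpow hi u c)
  · simp only [rlIntegral, h_parts, ← intervalIntegral.integral_div, sub_self,
      Real.zero_rpow hi_ne, zero_div, mul_zero, sub_zero, mul_div_assoc]
  · rw [min_eq_left huc, max_eq_right huc] at hx
    have h_mem : U ∈ 𝓝 x := hU.mem_nhds (hsub ⟨hx.1.le, hx.2.le⟩)
    exact ((hf.differentiableOn one_ne_zero x (mem_of_mem_nhds h_mem)).hasDerivWithinAt).hasDerivAt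
      h_mem

lemma hasDerivAt_rlIntegral_of_contDiffOn {U : Set ℝ} (hU : IsOpen U) (hf : ContDiffOn ℝ 1 f U)
    (hi : -1 < i) (hsub : Ioc a c ⊆ U) (hu : u ∈ Ioo a c) :
    HasDerivAt (rlIntegral i c f) (rlIntegral i c (derivWithin f U) u - f c * (c - u) ^ i) u := by
  have hi_ne : i + 1 ≠ 0 := by linarith
  have h_deriv_cont : ContinuousOn (derivWithin f U) (Ioc a c) :=
    (hf.continuousOn_derivWithin hU.uniqueDiffOn le_rfl).mono hsub
  have h := (((hasDerivAt_const_sub_rpow i hu.2).const_mul (f c)).div_const (i + 1)).sub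
    ((hasDerivAt_rlIntegral_of_pos h_deriv_cont (by linarith : 0 < i + 1) hu).div_const (i + 1))
  refine (h.congr_deriv ?_).congr_of_eventuallyEq ?_
  · rw [add_sub_cancel_right]
    field_simp
    ring
  · filter_upwards [Ioo_mem_nhds hu.1 hu.2] with v hv
    exact rlIntegral_eq_sub_rlIntegral_derivWithin hU hf hi hv.2.le
      fun x hx => hsub ⟨hv.1.trans_le hx.1, hx.2⟩

lemma contDiffOn_succ_rlIntegral_of_derivWithin {U : Set ℝ} {n : ℕ} (hU : IsOpen U)
    (hf : ContDiffOn ℝ 1 f U) (hi : -1 < i) (hsub : Ioc a c ⊆ U)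
    (hf' : ContDiffOn ℝ n (rlIntegral i c (derivWithin f U)) (Ioo a c)) :
    ContDiffOn ℝ (n + 1) (rlIntegral i c f) (Ioo a c) :=
  contDiffOn_succ_of_hasDerivAt isOpen_Ioo
    (fun _ hu => hasDerivAt_rlIntegral_of_contDiffOn hU hf hi hsub hu)
    (hf'.sub (contDiffOn_const.mul ((contDiffOn_const_sub_rpow n c i).mono fun _ hu => hu.2)))

lemma contDiffOn_rlIntegral {U : Set ℝ} (hU : IsOpen U) {k : ℕ} (hf : ContDiffOn ℝ k f U)
    (hi : -1 < i) (hsub : Ioc a c ⊆ U) : ContDiffOn ℝ k (rlIntegral i c f) (Ioo a c) := by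
  induction k generalizing f with
  | zero =>
    exact contDiffOn_zero.2 (continuousOn_rlIntegral (hf.continuousOn.mono hsub) hi)
  | succ k ih =>
    push_cast at hf ⊢
    have hf' := ((contDiffOn_succ_iff_derivWithin hU.uniqueDiffOn).1 hf).2.2
    exact contDiffOn_succ_rlIntegral_of_derivWithin hU (hf.of_le le_add_self) hi hsub (ih hf')

lemma abs_IccExtend_increment_le {α C : ℝ≥0} (hbc : b ≤ c) (hf : HolderOnWith C α f (Icc b c))
    {t : ℝ} (ht : 0 ≤ t) (u : ℝ) :
    |IccExtend hbc ((Icc b c).domRestrict f) (u + t) -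
      IccExtend hbc ((Icc b c).domRestrict f) u| ≤ C * t ^ (α : ℝ) := by
  refine hf.dist_le_of_le (projIcc b c hbc (u + t)).2 (projIcc b c hbc u).2 ?_
  have h_dist := (LipschitzWith.projIcc hbc).dist_le_mul (u + t) u
  rwa [NNReal.coe_one, one_mul, Real.dist_eq (u + t), add_sub_cancel_left, abs_of_nonneg ht]
    at h_dist

lemma contDiffOn_one_rlIntegral_of_holderOnWith {α C : ℝ≥0} (hα : 0 < α) (hi : -1 < i)
    (hαi : 0 < α + i) (hf : HolderOnWith C α f (Icc b c)) :
    ContDiffOn ℝ 1 (rlIntegral i c f) (Ioo b c) := by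
  rcases le_or_gt c b with hcb | hbc
  · simp [Ioo_eq_empty hcb.not_gt]
  have hf_cont := hf.continuousOn hα
  have h_increment : ∀ u, ∀ t ∈ Ioc 0 (c - b), _ := fun u t ht =>
    abs_IccExtend_increment_le hbc.le hf ht.1.le u
  have h_marchaud := continuous_marchaudDeriv hf_cont.domRestrict.Icc_extend'
    (sub_nonneg.2 hbc.le) hαi h_increment
  have h_succ := contDiffOn_succ_of_hasDerivAt (n := 0) isOpen_Ioo
    (fun u hu => hasDerivAt_rlIntegral_of_windowIntegral hbc.le hf_cont hi hu
      (hasDerivAt_windowIntegral hf_cont.domRestrict.Icc_extend' hi (sub_pos.2 hbc) hαi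
        h_increment u))
    ((contDiff_zero.2 h_marchaud).contDiffOn.sub
      (contDiffOn_const.mul ((contDiffOn_const_sub_rpow 0 c i).mono fun _ hu => hu.2)))
  simpa using h_succ

lemma contDiffOn_succ_rlIntegral_of_holderOnWith {U : Set ℝ} (hU : IsOpen U) {k : ℕ}
    {α C : ℝ≥0} (hf : ContDiffOn ℝ k f U) (hα : 0 < α) (hi : -1 < i) (hαi : 0 < α + i)
    (hsub : Icc b c ⊆ U) (hf_holder : HolderOnWith C α (iteratedDerivWithin k f U) (Icc b c)) :
    ContDiffOn ℝ (k + 1) (rlIntegral i c f) (Ioo b c) := by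
  induction k generalizing f with
  | zero =>
    rw [iteratedDerivWithin_zero] at hf_holder
    simpa using contDiffOn_one_rlIntegral_of_holderOnWith hα hi hαi hf_holder
  | succ k ih =>
    push_cast at hf ⊢
    have hf' := ((contDiffOn_succ_iff_derivWithin hU.uniqueDiffOn).1 hf).2.2
    rw [iteratedDerivWithin_succ'] at hf_holder
    exact_mod_cast contDiffOn_succ_rlIntegral_of_derivWithin hU (hf.of_le le_add_self) hi
      (Ioc_subset_Icc_self.trans hsub) (by exact_mod_cast ih hf' hf_holder)

end RiemannLiouville

section Endpoint

variable {f : ℝ → ℝ} {i a c d u : ℝ}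

lemma intervalIntegrable_mul_sub_rpow (hcd : c ≤ d) (hf : IntervalIntegrable f volume c d)
    (i : ℝ) (hu : u < c) : IntervalIntegrable (fun w => f w * (w - u) ^ i) volume c d := by
  refine hf.mul_continuousOn fun w hw => ContinuousAt.continuousWithinAt ?_
  rw [uIcc_of_le hcd] at hw
  exact (continuousAt_id.sub continuousAt_const).rpow_const
    (Or.inl (sub_pos.2 (hu.trans_le hw.1)).ne')

lemma hasDerivAt_integral_mul_sub_rpow (hcd : c ≤ d) (hf : IntervalIntegrable f volume c d)
    (i : ℝ) (hu : u < c) :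
    HasDerivAt (fun u => ∫ w in c..d, f w * (w - u) ^ i)
      (-i * ∫ w in c..d, f w * (w - u) ^ (i - 1)) u := by
  obtain ⟨m, hum, hmc⟩ := exists_between hu
  have h_kernel_cont : ContinuousOn (fun x : ℝ => x ^ (i - 1)) (Icc (c - m) (d - (u - 1))) :=
    fun x hx => (Real.continuousAt_rpow_const _ _
      (Or.inl ((sub_pos.2 hmc).trans_le hx.1).ne')).continuousWithinAt
  obtain ⟨M, hM⟩ := isCompact_Icc.exists_bound_of_continuousOn h_kernel_cont
  rw [← intervalIntegral.integral_const_mul]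
  refine (intervalIntegral.hasDerivAt_integral_of_dominated_loc_of_deriv_le
    (bound := fun w => ‖f w‖ * (|i| * M)) (s := Ioo (u - 1) m)
    (F' := fun v w => -i * (f w * (w - v) ^ (i - 1)))
    (Ioo_mem_nhds (by linarith) hum)
    ?_ (intervalIntegrable_mul_sub_rpow hcd hf i hu)
    ((intervalIntegrable_mul_sub_rpow hcd hf (i - 1) hu).const_mul _).def'.aestronglyMeasurable
    (.of_forall fun w hw v hv => ?_) (hf.norm.mul_const _)
    (.of_forall fun w hw v hv => ?_)).2
  · filter_upwards [Iio_mem_nhds hu] with v hv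
    exact (intervalIntegrable_mul_sub_rpow hcd hf i hv).def'.aestronglyMeasurable
  all_goals rw [uIoc_of_le hcd] at hw
  · have h_kernel := hM (w - v) ⟨by linarith [hw.1, hv.2], by linarith [hw.2, hv.1]⟩
    calc ‖-i * (f w * (w - v) ^ (i - 1))‖ = ‖f w‖ * (|i| * ‖(w - v) ^ (i - 1)‖) := by
          rw [norm_mul, norm_mul, norm_neg, Real.norm_eq_abs i]
          ring
      _ ≤ ‖f w‖ * (|i| * M) := by gcongr
  · have hvw : 0 < w - v := by linarith [hw.1, hv.2]
    refine ((((hasDerivAt_id' v).const_sub w).rpow_const (p := i)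
      (Or.inl hvw.ne')).const_mul (f w)).congr_deriv ?_
    ring

lemma contDiffOn_integral_mul_sub_rpow (hcd : c ≤ d) (hf : IntervalIntegrable f volume c d)
    (i : ℝ) (n : ℕ) : ContDiffOn ℝ n (fun u => ∫ w in c..d, f w * (w - u) ^ i) (Iio c) := by
  induction n generalizing i with
  | zero =>
    exact contDiffOn_zero.2 fun u hu =>
      (hasDerivAt_integral_mul_sub_rpow hcd hf i hu).continuousAt.continuousWithinAt
  | succ n ih =>
    exact_mod_cast contDiffOn_succ_of_hasDerivAt isOpen_Iio
      (fun u hu => hasDerivAt_integral_mul_sub_rpow hcd hf i hu)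
      (contDiffOn_const.mul (ih (i - 1)))

lemma intervalIntegrable_rlIntegrand (hf : ContinuousOn f (Icc u c)) (hi : -1 < i) (huc : u ≤ c) :
    IntervalIntegrable (fun w => f w * (w - u) ^ i) volume u c :=
  (intervalIntegrable_sub_rpow hi u c).continuousOn_mul (by rwa [uIcc_of_le huc])

lemma rlIntegral_eq_add (hf : ContinuousOn f (Icc u c)) (hcd : c ≤ d)
    (hf_int : IntervalIntegrable f volume c d) (hi : -1 < i) (huc : u < c) :
    rlIntegral i d f u = rlIntegral i c f u + ∫ w in c..d, f w * (w - u) ^ i :=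
  (intervalIntegral.integral_add_adjacent_intervals (intervalIntegrable_rlIntegrand hf hi huc.le)
    (intervalIntegrable_mul_sub_rpow hcd hf_int i huc)).symm

lemma rlIntegral_eventuallyEq_add (hf : ContinuousOn f (Ioo a d))
    (hf_int : ∀ c ∈ Ioo a d, IntervalIntegrable f volume c d) (hi : -1 < i) (hu : u ∈ Ioo a c)
    (hcd : c < d) :
    rlIntegral i d f =ᶠ[𝓝 u]
      fun v => rlIntegral i c f v + ∫ w in c..d, f w * (w - v) ^ i := by
  filter_upwards [Ioo_mem_nhds hu.1 hu.2] with v hv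
  exact rlIntegral_eq_add (hf.mono fun x hx => ⟨hv.1.trans_le hx.1, hx.2.trans_lt hcd⟩) hcd.le
    (hf_int c ⟨hu.1.trans hu.2, hcd⟩) hi hv.2

lemma hasDerivAt_rlIntegral (hf : ContinuousOn f (Ioo a d))
    (hf_int : ∀ c ∈ Ioo a d, IntervalIntegrable f volume c d) (hi : 0 < i) (hu : u ∈ Ioo a d) :
    HasDerivAt (rlIntegral i d f) (-i * rlIntegral (i - 1) d f u) u := by
  obtain ⟨c, huc, hcd⟩ := exists_between hu.2
  have hf_sub : ContinuousOn f (Ioc a c) := hf.mono fun x hx => ⟨hx.1, hx.2.trans_lt hcd⟩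
  have huac : u ∈ Ioo a c := ⟨hu.1, huc⟩
  have h := (hasDerivAt_rlIntegral_of_pos hf_sub hi huac).add
    (hasDerivAt_integral_mul_sub_rpow hcd.le (hf_int c ⟨hu.1.trans huc, hcd⟩) i huc)
  rw [← mul_add, ← (rlIntegral_eventuallyEq_add hf hf_int (by linarith) huac hcd).eq_of_nhds] at h
  exact h.congr_of_eventuallyEq (rlIntegral_eventuallyEq_add hf hf_int (by linarith) huac hcd)

lemma hasDerivAt_rlIntegral_zero (hf : ContinuousOn f (Ioo a d))
    (hf_int : ∀ c ∈ Ioo a d, IntervalIntegrable f volume c d) (hu : u ∈ Ioo a d) :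
    HasDerivAt (rlIntegral 0 d f) (-f u) u := by
  have h_nhds : Ioo a d ∈ 𝓝 u := Ioo_mem_nhds hu.1 hu.2
  have h_ftc := intervalIntegral.integral_hasDerivAt_left (hf_int u hu)
    (hf.stronglyMeasurableAtFilter isOpen_Ioo u hu) (hf.continuousAt h_nhds)
  refine h_ftc.congr_of_eventuallyEq (.of_forall fun v => ?_)
  simp only [rlIntegral, Real.rpow_zero, mul_one]

lemma contDiffOn_rlIntegral_of_forall_lt {n : ℕ} (hf : ContinuousOn f (Ioo a d))
    (hf_int : ∀ c ∈ Ioo a d, IntervalIntegrable f volume c d) (hi : -1 < i)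
    (h : ∀ u ∈ Ioo a d, ∃ b c, u ∈ Ioo b c ∧ c < d ∧ ContDiffOn ℝ n (rlIntegral i c f) (Ioo b c)) :
    ContDiffOn ℝ n (rlIntegral i d f) (Ioo a d) := by
  intro u hu
  obtain ⟨b, c, hbc, hcd, h_smooth⟩ := h u hu
  have h_tail := contDiffOn_integral_mul_sub_rpow hcd.le
    (hf_int c ⟨hu.1.trans hbc.2, hcd⟩) i n
  refine ContDiffAt.contDiffWithinAt (ContDiffAt.congr_of_eventuallyEq ?_
    (rlIntegral_eventuallyEq_add hf hf_int hi ⟨hu.1, hbc.2⟩ hcd))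
  exact (h_smooth.contDiffAt (Ioo_mem_nhds hbc.1 hbc.2)).add
    (h_tail.contDiffAt (Iio_mem_nhds hbc.2))

lemma contDiffOn_rlIntegral_Ioo {k : ℕ} (hf : ContDiffOn ℝ k f (Ioo a d))
    (hf_int : ∀ c ∈ Ioo a d, IntervalIntegrable f volume c d) (hi : -1 < i) :
    ContDiffOn ℝ k (rlIntegral i d f) (Ioo a d) := by
  refine contDiffOn_rlIntegral_of_forall_lt hf.continuousOn hf_int hi fun u hu => ?_
  obtain ⟨c, huc, hcd⟩ := exists_between hu.2
  exact ⟨a, c, ⟨hu.1, huc⟩, hcd,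
    contDiffOn_rlIntegral isOpen_Ioo hf hi fun x hx => ⟨hx.1, hx.2.trans_lt hcd⟩⟩

lemma contDiffOn_succ_rlIntegral_of_nonneg {k : ℕ} (hf : ContDiffOn ℝ k f (Ioo a d))
    (hf_int : ∀ c ∈ Ioo a d, IntervalIntegrable f volume c d) (hi : 0 ≤ i) :
    ContDiffOn ℝ (k + 1) (rlIntegral i d f) (Ioo a d) := by
  rcases hi.eq_or_lt with rfl | hi
  · exact contDiffOn_succ_of_hasDerivAt isOpen_Ioo
      (fun u hu => hasDerivAt_rlIntegral_zero hf.continuousOn hf_int hu) hf.neg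
  · exact contDiffOn_succ_of_hasDerivAt isOpen_Ioo
      (fun u hu => hasDerivAt_rlIntegral hf.continuousOn hf_int hi hu)
      (contDiffOn_const.mul (contDiffOn_rlIntegral_Ioo hf hf_int (by linarith)))

end Endpoint

lemma holderOnWith_of_dist_le {X Y : Type*} [PseudoMetricSpace X] [PseudoMetricSpace Y]
    {C α : ℝ≥0} {f : X → Y} {s : Set X}
    (h : ∀ x ∈ s, ∀ y ∈ s, dist (f x) (f y) ≤ C * dist x y ^ (α : ℝ)) : HolderOnWith C α f s := by
  intro x hx y hy
  rw [edist_nndist, edist_nndist, ← ENNReal.coe_rpow_of_nonneg _ α.coe_nonneg, ← ENNReal.coe_mul,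
    ENNReal.coe_le_coe, ← NNReal.coe_le_coe]
  simpa only [NNReal.coe_mul, NNReal.coe_rpow, coe_nndist] using h x hx y hy

/-- Local Hölder continuity with exponent `α` on a set: the Hölder analogue of
`LocallyLipschitzOn`. -/
def LocallyHolderOn (α : ℝ≥0) (f : ℝ → ℝ) (s : Set ℝ) : Prop :=
  ∀ x ∈ s, ∃ C : ℝ≥0, ∃ t ∈ 𝓝[s] x, HolderOnWith C α f t

namespace LocallyHolderOn

variable {α : ℝ≥0} {f g : ℝ → ℝ} {s t : Set ℝ}

lemma congr (hf : LocallyHolderOn α f s) (h : EqOn g f s) : LocallyHolderOn α g s := by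
  intro x hx
  obtain ⟨C, t, ht, hC⟩ := hf x hx
  refine ⟨C, t ∩ s, inter_mem ht self_mem_nhdsWithin, fun y hy z hz => ?_⟩
  rw [h hy.2, h hz.2]
  exact hC y hy.1 z hz.1

lemma continuousOn (hf : LocallyHolderOn α f s) (hα : 0 < α) : ContinuousOn f s := by
  intro x hx
  obtain ⟨C, t, ht, hC⟩ := hf x hx
  exact (hC.continuousOn hα x (mem_of_mem_nhdsWithin hx ht)).mono_of_mem_nhdsWithin ht

lemma add (hf : LocallyHolderOn α f s) (hg : LocallyHolderOn α g s) :
    LocallyHolderOn α (fun x => f x + g x) s := by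
  intro x hx
  obtain ⟨C, t, ht, hC⟩ := hf x hx
  obtain ⟨D, t', ht', hD⟩ := hg x hx
  exact ⟨C + D, t ∩ t', inter_mem ht ht', HolderWith.restrict_iff.1
    ((HolderWith.restrict_iff.2 (hC.mono inter_subset_left)).add
      (HolderWith.restrict_iff.2 (hD.mono inter_subset_right)))⟩

lemma mul (hf : LocallyHolderOn α f s) (hg : LocallyHolderOn α g s) (hα : 0 < α) :
    LocallyHolderOn α (fun x => f x * g x) s := by
  intro x hx
  obtain ⟨C, t, ht, hC⟩ := hf x hx
  obtain ⟨D, t', ht', hD⟩ := hg x hx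
  have h_bounded : ∀ {h : ℝ → ℝ}, ContinuousOn h s → ∀ᶠ y in 𝓝[s] x, ‖h y‖₊ ≤ ‖h x‖₊ + 1 :=
    fun hh => (hh x hx).nnnorm.eventually_le_const (lt_add_one _)
  refine ⟨(‖f x‖₊ + 1) * D + (‖g x‖₊ + 1) * C, _,
    inter_mem (inter_mem ht ht') ((h_bounded (hf.continuousOn hα)).and
      (h_bounded (hg.continuousOn hα))), holderOnWith_of_dist_le fun y hy z hz => ?_⟩
  have hfy : ‖f y‖ ≤ ‖f x‖ + 1 := hy.2.1
  have hgz : ‖g z‖ ≤ ‖g x‖ + 1 := hz.2.2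
  calc dist (f y * g y) (f z * g z)
      ≤ dist (f y * g y) (f y * g z) + dist (f y * g z) (f z * g z) := dist_triangle _ _ _
    _ = ‖f y‖ * dist (g y) (g z) + dist (f y) (f z) * ‖g z‖ := by
      simp only [dist_eq_norm, ← mul_sub, ← sub_mul, norm_mul]
    _ ≤ (‖f x‖ + 1) * (D * dist y z ^ (α : ℝ)) + C * dist y z ^ (α : ℝ) * (‖g x‖ + 1) := by
      gcongr
      exacts [hD.dist_le hy.1.2 hz.1.2, hC.dist_le hy.1.1 hz.1.1]
    _ = ((‖f x‖₊ + 1) * D + (‖g x‖₊ + 1) * C : ℝ≥0) * dist y z ^ (α : ℝ) := by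
      push_cast
      ring

lemma comp (hf : LocallyHolderOn α f t) {h : ℝ → ℝ} (hs : IsOpen s) (hh : ContDiffOn ℝ 1 h s)
    (h_maps : MapsTo h s t) : LocallyHolderOn α (fun x => f (h x)) s := by
  intro x hx
  obtain ⟨C, t', ht', hC⟩ := hf (h x) (h_maps hx)
  obtain ⟨K, s', hs', hK⟩ := (hh.contDiffAt (hs.mem_nhds hx)).exists_lipschitzOnWith
  have h_preimage : h ⁻¹' t' ∈ 𝓝[s] x :=
    (hh.continuousOn x hx).tendsto_nhdsWithin h_maps ht'
  have h_comp := hC.comp (hK.holderOnWith.mono inter_subset_right) fun y hy => hy.1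
  rw [mul_one] at h_comp
  exact ⟨_, h ⁻¹' t' ∩ s', inter_mem h_preimage (mem_nhdsWithin_of_mem_nhds hs'), h_comp⟩

lemma of_le {β : ℝ≥0} (hf : LocallyHolderOn α f s) (hβ : β ≤ α) : LocallyHolderOn β f s := by
  intro x hx
  obtain ⟨C, t, ht, hC⟩ := hf x hx
  have h_diam : ∀ y ∈ t ∩ Metric.eball x 1, ∀ z ∈ t ∩ Metric.eball x 1,
      edist y z ≤ (2 : ℝ≥0) := fun y hy z hz =>
    (Metric.edist_le_ediam_of_mem hy.2 hz.2).trans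
      (by simpa using Metric.ediam_eball_le (x := x) (r := 1))
  exact ⟨_, _, inter_mem ht (mem_nhdsWithin_of_mem_nhds (Metric.eball_mem_nhds x one_pos)),
    (hC.mono inter_subset_left).of_le h_diam hβ⟩

lemma of_contDiffOn (hs : IsOpen s) (hf : ContDiffOn ℝ 1 f s) (hα : α ≤ 1) :
    LocallyHolderOn α f s := by
  suffices h : LocallyHolderOn 1 f s from h.of_le hα
  intro x hx
  obtain ⟨K, t, ht, hK⟩ := (hf.contDiffAt (hs.mem_nhds hx)).exists_lipschitzOnWith
  exact ⟨K, t, mem_nhdsWithin_of_mem_nhds ht, hK.holderOnWith⟩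

lemma of_mul_left {w : ℝ → ℝ} (hs : IsOpen s) (hα : 0 < α) (hα_one : α ≤ 1)
    (hw : ContDiffOn ℝ 1 w s) (hw_ne : ∀ x ∈ s, w x ≠ 0)
    (h : LocallyHolderOn α (fun x => w x * f x) s) : LocallyHolderOn α f s :=
  ((of_contDiffOn hs (hw.inv hw_ne) hα_one).mul h hα).congr fun x hx =>
    (inv_mul_cancel_left₀ (hw_ne x hx) (f x)).symm

end LocallyHolderOn

/-- The local Hölder class `C^{k,α}` on `s`: `k` times continuously differentiable with locally
`α`-Hölder `k`-th derivative. -/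
structure ContDiffHolderOn (k : ℕ) (α : ℝ≥0) (f : ℝ → ℝ) (s : Set ℝ) : Prop where
  contDiffOn : ContDiffOn ℝ k f s
  locallyHolderOn : LocallyHolderOn α (iteratedDerivWithin k f s) s

namespace ContDiffHolderOn

variable {k : ℕ} {α : ℝ≥0} {f g : ℝ → ℝ} {s t : Set ℝ}

lemma of_contDiffOn_succ (hs : IsOpen s) (hf : ContDiffOn ℝ (k + 1) f s) (hα : α ≤ 1) :
    ContDiffHolderOn k α f s :=
  have h_split := (contDiffOn_nat_succ_iff_contDiffOn_one_iteratedDerivWithin hs.uniqueDiffOn).1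
    (by exact_mod_cast hf)
  ⟨h_split.1, .of_contDiffOn hs h_split.2 hα⟩

lemma congr (hf : ContDiffHolderOn k α f s) (h : EqOn g f s) : ContDiffHolderOn k α g s :=
  ⟨hf.contDiffOn.congr h, hf.locallyHolderOn.congr (iteratedDerivWithin_congr h)⟩

lemma add (hs : IsOpen s) (hf : ContDiffHolderOn k α f s) (hg : ContDiffHolderOn k α g s) :
    ContDiffHolderOn k α (fun x => f x + g x) s :=
  ⟨hf.contDiffOn.add hg.contDiffOn, (hf.locallyHolderOn.add hg.locallyHolderOn).congr fun x hx =>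
    iteratedDerivWithin_add hx hs.uniqueDiffOn (hf.contDiffOn x hx) (hg.contDiffOn x hx)⟩

lemma succ_iff (hs : IsOpen s) : ContDiffHolderOn (k + 1) α f s ↔
    DifferentiableOn ℝ f s ∧ ContDiffHolderOn k α (derivWithin f s) s := by
  have h_contDiff := contDiffOn_succ_iff_derivWithin (n := k) (f := f) hs.uniqueDiffOn
  refine ⟨fun ⟨hf, hf_holder⟩ => ?_, fun ⟨hf, hf', hf_holder⟩ => ⟨?_, ?_⟩⟩
  · rw [iteratedDerivWithin_succ'] at hf_holder
    obtain ⟨h_diff, -, h_deriv⟩ := h_contDiff.1 (by exact_mod_cast hf)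
    exact ⟨h_diff, h_deriv, hf_holder⟩
  · exact_mod_cast h_contDiff.2 ⟨hf, fun h => absurd h (WithTop.natCast_ne_top k), hf'⟩
  · rwa [iteratedDerivWithin_succ']

lemma comp_mul {h w : ℝ → ℝ} (hs : IsOpen s) (ht : IsOpen t) (hα : 0 < α) (hα_one : α ≤ 1)
    (hf : ContDiffHolderOn k α f t) (hh : ContDiffOn ℝ (k + 1) h s)
    (hw : ContDiffOn ℝ (k + 1) w s) (h_maps : MapsTo h s t) :
    ContDiffHolderOn k α (fun x => f (h x) * w x) s := by
  induction k generalizing f w with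
  | zero =>
    rw [Nat.cast_zero, zero_add] at hh hw
    have hf_holder : LocallyHolderOn α f t := by simpa using hf.locallyHolderOn
    have h_mul := (hf_holder.comp hs hh h_maps).mul (.of_contDiffOn hs hw hα_one) hα
    exact ⟨contDiffOn_zero.2 (h_mul.continuousOn hα), by rwa [iteratedDerivWithin_zero]⟩
  | succ k ih =>
    push_cast at hh hw
    obtain ⟨hf_diff, hf'⟩ := (succ_iff ht).1 hf
    obtain ⟨hh_diff, -, hh'⟩ := (contDiffOn_succ_iff_derivWithin hs.uniqueDiffOn).1 hh
    obtain ⟨hw_diff, -, hw'⟩ := (contDiffOn_succ_iff_derivWithin hs.uniqueDiffOn).1 hw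
    have hh_le := hh.of_le le_self_add
    have h_left := ih hf' hh_le (hh'.mul (hw.of_le le_self_add : ContDiffOn ℝ (k + 1) w s))
    have h_right := ih (of_contDiffOn_succ ht (by exact_mod_cast hf.contDiffOn) hα_one) hh_le hw'
    have h_comp_diff : DifferentiableOn ℝ (fun x => f (h x)) s := hf_diff.comp hh_diff h_maps
    refine (succ_iff hs).2 ⟨h_comp_diff.mul hw_diff, (h_left.add hs h_right).congr fun x hx => ?_⟩
    have h_chain : derivWithin (fun x => f (h x)) s x =
        derivWithin f t (h x) * derivWithin h s x :=
      derivWithin_comp x (hf_diff (h x) (h_maps hx)) (hh_diff x hx) h_maps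
    rw [derivWithin_fun_mul (h_comp_diff x hx) (hw_diff x hx), h_chain]
    ring

lemma of_abs_mul_iteratedDerivWithin_sub_le {w : ℝ → ℝ} {r C : ℝ} (hs : IsOpen s) (hr : 0 < r)
    (hw : ContDiffOn ℝ 1 w s) (hw_ne : ∀ x ∈ s, w x ≠ 0) (hf : ContDiffOn ℝ k f s)
    (h : ∀ x ∈ s, ∀ y ∈ s,
      |w x * iteratedDerivWithin k f s x - w y * iteratedDerivWithin k f s y| ≤ C * |x - y| ^ r) :
    ContDiffHolderOn k (min r 1).toNNReal f s := by
  lift r to ℝ≥0 using hr.le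
  have h_holder : HolderOnWith C.toNNReal r (fun x => w x * iteratedDerivWithin k f s x) s :=
    holderOnWith_of_dist_le fun x hx y hy => (h x hx y hy).trans
      (mul_le_mul_of_nonneg_right (Real.le_coe_toNNReal C) (Real.rpow_nonneg (abs_nonneg _) _))
  have h_locally : LocallyHolderOn r (fun x => w x * iteratedDerivWithin k f s x) s :=
    fun _ _ => ⟨_, s, self_mem_nhdsWithin, h_holder⟩
  have h_min : (min (r : ℝ) 1).toNNReal = min r 1 := by
    rw [← NNReal.coe_one, ← NNReal.coe_min, Real.toNNReal_coe]
  rw [h_min]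
  exact ⟨hf, .of_mul_left hs (lt_min (NNReal.coe_pos.1 hr) one_pos) (min_le_right _ _) hw hw_ne
    (h_locally.of_le (min_le_left _ _))⟩

end ContDiffHolderOn

lemma contDiffOn_succ_rlIntegral_of_contDiffHolderOn {f : ℝ → ℝ} {i a d : ℝ} {k : ℕ} {α : ℝ≥0}
    (hf : ContDiffHolderOn k α f (Ioo a d))
    (hf_int : ∀ c ∈ Ioo a d, IntervalIntegrable f volume c d) (hα : 0 < α) (hi : -1 < i)
    (hαi : 0 < α + i) : ContDiffOn ℝ (k + 1) (rlIntegral i d f) (Ioo a d) := by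
  suffices h : ContDiffOn ℝ (k + 1 : ℕ) (rlIntegral i d f) (Ioo a d) by exact_mod_cast h
  refine contDiffOn_rlIntegral_of_forall_lt hf.contDiffOn.continuousOn hf_int hi fun u hu => ?_
  obtain ⟨C, t, ht, hC⟩ := hf.locallyHolderOn u hu
  rw [isOpen_Ioo.nhdsWithin_eq hu] at ht
  obtain ⟨b, c, -, hbc_nhds, h_sub⟩ :=
    exists_Icc_mem_subset_of_mem_nhds (inter_mem ht (Ioo_mem_nhds hu.1 hu.2))
  have hbc : u ∈ Ioo b c := Icc_mem_nhds_iff.1 hbc_nhds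
  have hcd : c < d := (h_sub (right_mem_Icc.2 (hbc.1.trans hbc.2).le)).2.2
  exact ⟨b, c, hbc, hcd, mod_cast
    contDiffOn_succ_rlIntegral_of_holderOnWith isOpen_Ioo hf.contDiffOn hα hi hαi
      (h_sub.trans inter_subset_right) (hC.mono (h_sub.trans inter_subset_left))⟩

section Growth

open Asymptotics

variable {f : ℝ → ℝ} {a b e : ℝ}

lemma isBigO_sub_rpow_of_deriv (he : e < 0) (hf : ∀ᶠ x in 𝓝[<] b, DifferentiableAt ℝ f x)
    (h : deriv f =O[𝓝[<] b] fun x => (b - x) ^ (e - 1)) :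
    f =O[𝓝[<] b] fun x => (b - x) ^ e := by
  obtain ⟨C, hC, h_bound⟩ := h.exists_pos
  obtain ⟨m, hm, h_sub⟩ := mem_nhdsLT_iff_exists_Ioo_subset.1 (hf.and h_bound.bound)
  obtain ⟨p, hmp, hpb⟩ := exists_between (mem_Iio.1 hm)
  have hp_pos : 0 < (b - p) ^ e := Real.rpow_pos_of_pos (sub_pos.2 hpb) e
  set K := ‖f p‖ / (b - p) ^ e + C / -e with hK
  have h_majorant : ∀ y < b,
      HasDerivAt (fun y => K * (b - y) ^ e) (K * (-e * (b - y) ^ (e - 1))) y :=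
    fun y hy => by simpa only [sub_add_cancel] using
      (hasDerivAt_const_sub_rpow (e - 1) hy).const_mul K
  have h_start : ‖f p‖ ≤ K * (b - p) ^ e := by
    rw [hK, add_mul, div_mul_cancel₀ _ hp_pos.ne']
    exact le_add_of_nonneg_right (by have := neg_pos.2 he; positivity)
  have h_deriv_le : ∀ y ∈ Ioo m b, ‖deriv f y‖ ≤ K * (-e * (b - y) ^ (e - 1)) := by
    intro y hy
    have h_pow : 0 ≤ (b - y) ^ (e - 1) := Real.rpow_nonneg (sub_nonneg.2 hy.2.le) _
    have hC_le : C ≤ K * -e := by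
      rw [hK, add_mul, div_mul_cancel₀ _ (neg_pos.2 he).ne']
      exact le_add_of_nonneg_left (by have := neg_pos.2 he; positivity)
    calc ‖deriv f y‖ ≤ C * (b - y) ^ (e - 1) := by simpa [abs_of_nonneg h_pow] using (h_sub hy).2
      _ ≤ K * -e * (b - y) ^ (e - 1) := by gcongr
      _ = K * (-e * (b - y) ^ (e - 1)) := mul_assoc _ _ _
  refine .of_bound K (mem_of_superset (Ioo_mem_nhdsLT hpb) fun x hx => ?_)
  have h_maps : ∀ y ∈ Icc p x, y ∈ Ioo m b := fun y hy =>
    ⟨hmp.trans_le hy.1, hy.2.trans_lt hx.2⟩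
  rw [mem_ofPred, Real.norm_of_nonneg (Real.rpow_nonneg (sub_nonneg.2 hx.2.le) e)]
  exact image_norm_le_of_norm_deriv_right_le_deriv_boundary'
    (fun y hy => (h_sub (h_maps y hy)).1.continuousAt.continuousWithinAt)
    (fun y hy => (h_sub (h_maps y (Ico_subset_Icc_self hy))).1.hasDerivAt.hasDerivWithinAt)
    h_start
    (fun y hy => (h_majorant y (h_maps y hy).2).continuousAt.continuousWithinAt)
    (fun y hy => (h_majorant y (h_maps y (Ico_subset_Icc_self hy)).2).hasDerivWithinAt)
    (fun y hy => h_deriv_le y (h_maps y (Ico_subset_Icc_self hy))) (right_mem_Icc.2 hx.1.le)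

lemma isBigO_sub_rpow_of_iteratedDerivWithin {k : ℕ} (hab : a < b) (he : e < 0)
    (hf : ContDiffOn ℝ k f (Ioo a b))
    (h : iteratedDerivWithin k f (Ioo a b) =O[𝓝[<] b] fun x => (b - x) ^ (e - k)) :
    f =O[𝓝[<] b] fun x => (b - x) ^ e := by
  induction k generalizing f e with
  | zero => simpa using h
  | succ k ih =>
    push_cast at hf h
    obtain ⟨hf_diff, -, hf'⟩ := (contDiffOn_succ_iff_derivWithin (uniqueDiffOn_Ioo a b)).1 hf
    rw [iteratedDerivWithin_succ', add_comm (k : ℝ), ← sub_sub] at h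
    have h_mem : ∀ᶠ x in 𝓝[<] b, x ∈ Ioo a b := Ioo_mem_nhdsLT hab
    refine isBigO_sub_rpow_of_deriv he
      (h_mem.mono fun x hx => hf_diff.differentiableAt (isOpen_Ioo.mem_nhds hx)) ?_
    exact (ih (by linarith) hf' h).congr'
      (h_mem.mono fun x hx => derivWithin_of_isOpen isOpen_Ioo hx) .rfl

lemma intervalIntegrable_of_isBigO_sub_rpow {c : ℝ} (he : -1 < e)
    (hf : ContinuousOn f (Ioo a b)) (h : f =O[𝓝[<] b] fun x => (b - x) ^ e)
    (hc : c ∈ Ioo a b) : IntervalIntegrable f volume c b := by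
  have h_rpow : IntervalIntegrable (fun x => (b - x) ^ e) volume c b := by
    simpa using
      (intervalIntegral.intervalIntegrable_rpow' (a := b - c) (b := 0) he).comp_sub_left b
  have h_rpow_filter : IntegrableAtFilter (fun x => (b - x) ^ e) (𝓝[<] b) :=
    ⟨Ioo c b, Ioo_mem_nhdsLT hc.2, (intervalIntegrable_iff_integrableOn_Ioo_of_le hc.2.le).1 h_rpow⟩
  have h_meas : StronglyMeasurableAtFilter f (𝓝[<] b) :=
    ⟨Ioo a b, Ioo_mem_nhdsLT (hc.1.trans hc.2), hf.aestronglyMeasurable measurableSet_Ioo⟩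
  obtain ⟨s, hs, hs_int⟩ := h.integrableAtFilter h_meas h_rpow_filter
  obtain ⟨m, hm, h_sub⟩ := (mem_nhdsLT_iff_exists_mem_Ico_Ioo_subset hc.2).1 hs
  have h_left : IntervalIntegrable f volume c m :=
    (hf.mono fun x hx => ⟨hc.1.trans_le hx.1, hx.2.trans_lt hm.2⟩).intervalIntegrable_of_Icc hm.1
  exact h_left.trans
    ((intervalIntegrable_iff_integrableOn_Ioo_of_le hm.2.le).2 (hs_int.mono_set h_sub))

lemma intervalIntegrable_of_isBigO_pow_mul_iteratedDerivWithin {k : ℕ} {c : ℝ} (he : -1 < e)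
    (hf : ContDiffOn ℝ k f (Ioo a b))
    (h : (fun x => (b - x) ^ k * iteratedDerivWithin k f (Ioo a b) x) =O[𝓝[<] b]
      fun x => (b - x) ^ e) (hc : c ∈ Ioo a b) : IntervalIntegrable f volume c b := by
  have h_exponent : -1 < min e (-1 / 2) := lt_min he (by norm_num)
  have h_neg : min e (-1 / 2) < 0 := (min_le_right _ _).trans_lt (by norm_num)
  refine intervalIntegrable_of_isBigO_sub_rpow h_exponent hf.continuousOn
    (isBigO_sub_rpow_of_iteratedDerivWithin (hc.1.trans hc.2) h_neg hf ?_) hc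
  obtain ⟨C, hC, h_bound⟩ := h.exists_pos
  refine .of_bound C ?_
  filter_upwards [h_bound.bound, Ioo_mem_nhdsLT (sub_one_lt b)] with x hx hxb
  have h_pos : 0 < b - x := sub_pos.2 hxb.2
  have h_le : (b - x) ^ e ≤ (b - x) ^ min e (-1 / 2) :=
    Real.rpow_le_rpow_of_exponent_ge h_pos (by linarith [hxb.1]) (min_le_left _ _)
  rw [norm_mul, Real.norm_of_nonneg (pow_pos h_pos k).le,
    Real.norm_of_nonneg (Real.rpow_pos_of_pos h_pos e).le] at hx
  rw [Real.norm_of_nonneg (Real.rpow_pos_of_pos h_pos _).le, Real.rpow_sub_natCast h_pos.ne',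
    ← mul_div_assoc, le_div_iff₀' (pow_pos h_pos k)]
  exact hx.trans (mul_le_mul_of_nonneg_left h_le hC.le)

lemma intervalIntegrable_of_abs_pow_mul_iteratedDerivWithin_le {k : ℕ} {c C ε δ : ℝ} (hε : 0 < ε)
    (hδ : 0 < δ) (hf : ContDiffOn ℝ k f (Ioo a b))
    (h : ∀ x ∈ Ioo (b - δ) b,
      |(b - x) ^ k * iteratedDerivWithin k f (Ioo a b) x| ≤ C * (b - x) ^ (-1 + ε))
    (hc : c ∈ Ioo a b) : IntervalIntegrable f volume c b := by
  refine intervalIntegrable_of_isBigO_pow_mul_iteratedDerivWithin (e := -1 + ε) (by linarith) hf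
    (.of_bound C (mem_of_superset (Ioo_mem_nhdsLT (sub_lt_self b hδ)) fun x hx => ?_)) hc
  rw [mem_ofPred, Real.norm_of_nonneg (Real.rpow_nonneg (sub_nonneg.2 hx.2.le) _)]
  exact h x hx

end Growth

/-- The density of `φ(ℰ) dℰ` in the variable `w = ℰ²`. It turns `gfun φ i` into a
Riemann–Liouville integral. -/
noncomputable def sqDensity (φ : ℝ → ℝ) (w : ℝ) : ℝ :=
  φ (√w) * (1 / (2 * √w))

section SqDensity

variable {φ : ℝ → ℝ} {i u η : ℝ} {k : ℕ}

lemma image_sqrt_Ioo (hu : 0 ≤ u) (v : ℝ) : Real.sqrt '' Ioo u v = Ioo (√u) (√v) := by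
  ext x
  refine ⟨?_, fun hx => ?_⟩
  · rintro ⟨w, hw, rfl⟩
    exact ⟨Real.sqrt_lt_sqrt hu hw.1, Real.sqrt_lt_sqrt (hu.trans hw.1.le) hw.2⟩
  · have hx_pos : 0 < x := (Real.sqrt_nonneg u).trans_lt hx.1
    exact ⟨x ^ 2, ⟨(Real.sqrt_lt' hx_pos).1 hx.1, (Real.lt_sqrt hx_pos.le).1 hx.2⟩,
      Real.sqrt_sq hx_pos.le⟩

lemma hasDerivWithinAt_sqrt_Ioo (hu : 0 ≤ u) (v : ℝ) :
    ∀ w ∈ Ioo u v, HasDerivWithinAt Real.sqrt (1 / (2 * √w)) (Ioo u v) w := fun _ hw =>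
  (Real.hasDerivAt_sqrt (hu.trans_lt hw.1).ne').hasDerivWithinAt

lemma injOn_sqrt_Ioo (hu : 0 ≤ u) (v : ℝ) : InjOn Real.sqrt (Ioo u v) := fun _ hx _ hy h =>
  (Real.sqrt_inj (hu.trans hx.1.le) (hu.trans hy.1.le)).1 h

lemma mapsTo_sqrt_Ioo : MapsTo Real.sqrt (Ioo 0 1) (Ioo 0 1) :=
  mapsTo_iff_image_subset.2 (by simpa using (image_sqrt_Ioo le_rfl 1).subset)

lemma sqrt_exp_neg_two_mul (η : ℝ) : √(Real.exp (-2 * η)) = Real.exp (-η) := by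
  rw [← Real.exp_half]
  ring_nf

lemma exp_neg_two_mul_mem_Ioo (hη : 0 < η) : Real.exp (-2 * η) ∈ Ioo 0 1 :=
  ⟨Real.exp_pos _, Real.exp_lt_one_iff.2 (by linarith)⟩

lemma contDiffOn_sqrt_Ioo (n : WithTop ℕ∞) : ContDiffOn ℝ n Real.sqrt (Ioo 0 1) := fun _ hx =>
  (Real.contDiffAt_sqrt hx.1.ne').contDiffWithinAt

lemma contDiffOn_one_div_two_mul_sqrt (n : WithTop ℕ∞) :
    ContDiffOn ℝ n (fun w => 1 / (2 * √w)) (Ioo 0 1) :=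
  contDiffOn_const.div (contDiffOn_const.mul (contDiffOn_sqrt_Ioo n)) fun _ hw =>
    mul_ne_zero two_ne_zero (Real.sqrt_pos.2 hw.1).ne'

lemma contDiffOn_sqDensity (hφ : ContDiffOn ℝ k φ (Ioo 0 1)) :
    ContDiffOn ℝ k (sqDensity φ) (Ioo 0 1) :=
  (hφ.comp (contDiffOn_sqrt_Ioo k) mapsTo_sqrt_Ioo).mul (contDiffOn_one_div_two_mul_sqrt k)

lemma contDiffHolderOn_sqDensity {α : ℝ≥0} (hα : 0 < α) (hα_one : α ≤ 1)
    (hφ : ContDiffHolderOn k α φ (Ioo 0 1)) : ContDiffHolderOn k α (sqDensity φ) (Ioo 0 1) :=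
  hφ.comp_mul isOpen_Ioo isOpen_Ioo hα hα_one (contDiffOn_sqrt_Ioo _)
    (contDiffOn_one_div_two_mul_sqrt _) mapsTo_sqrt_Ioo

lemma intervalIntegrable_sqDensity (hφ : ∀ c ∈ Ioo (0 : ℝ) 1, IntervalIntegrable φ volume c 1) :
    ∀ c ∈ Ioo (0 : ℝ) 1, IntervalIntegrable (sqDensity φ) volume c 1 := by
  intro c hc
  have h_int := (intervalIntegrable_iff_integrableOn_Ioo_of_le (mapsTo_sqrt_Ioo hc).2.le).1
    (hφ _ (mapsTo_sqrt_Ioo hc))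
  have h_image : Real.sqrt '' Ioo c 1 = Ioo (√c) 1 := by simpa using image_sqrt_Ioo hc.1.le 1
  rw [← h_image, integrableOn_image_iff_integrableOn_abs_deriv_smul
    measurableSet_Ioo (hasDerivWithinAt_sqrt_Ioo hc.1.le 1) (injOn_sqrt_Ioo hc.1.le 1)] at h_int
  refine (intervalIntegrable_iff_integrableOn_Ioo_of_le hc.2.le).2
    (h_int.congr_fun (fun w _ => ?_) measurableSet_Ioo)
  simp only [sqDensity, smul_eq_mul]
  rw [abs_of_nonneg (by positivity), mul_comm]

lemma gfun_eq_rlIntegral (φ : ℝ → ℝ) (i : ℝ) (hη : 0 < η) :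
    gfun φ i η = (2 ^ i)⁻¹ * rlIntegral i 1 (sqDensity φ) (Real.exp (-2 * η)) := by
  set u := Real.exp (-2 * η) with hu
  obtain ⟨hu_pos, hu_lt⟩ : u ∈ Ioo 0 1 := exp_neg_two_mul_mem_Ioo hη
  have h_image : Real.sqrt '' Ioo u 1 = Ioo (√u) 1 := by simpa using image_sqrt_Ioo hu_pos.le 1
  rw [gfun, ← sqrt_exp_neg_two_mul, ← hu, rlIntegral,
    intervalIntegral.integral_of_le (mapsTo_sqrt_Ioo ⟨hu_pos, hu_lt⟩).2.le,
    intervalIntegral.integral_of_le hu_lt.le, integral_Ioc_eq_integral_Ioo,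
    integral_Ioc_eq_integral_Ioo, ← h_image,
    integral_image_eq_integral_abs_deriv_smul measurableSet_Ioo
      (hasDerivWithinAt_sqrt_Ioo hu_pos.le 1) (injOn_sqrt_Ioo hu_pos.le 1), ← integral_const_mul]
  refine setIntegral_congr_fun measurableSet_Ioo fun w hw => ?_
  simp only [sqDensity, smul_eq_mul]
  rw [abs_of_nonneg (by positivity), Real.sq_sqrt (hu_pos.trans hw.1).le,
    Real.div_rpow (sub_nonneg.2 hw.1.le) zero_le_two]
  ring

lemma contDiffOn_gfun {n : WithTop ℕ∞}
    (h : ContDiffOn ℝ n (rlIntegral i 1 (sqDensity φ)) (Ioo 0 1)) :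
    ContDiffOn ℝ n (gfun φ i) (Ioi 0) := by
  have h_exp : ContDiffOn ℝ n (fun η : ℝ => Real.exp (-2 * η)) (Ioi 0) := by fun_prop
  have h_maps : MapsTo (fun η : ℝ => Real.exp (-2 * η)) (Ioi 0) (Ioo 0 1) := fun _ hη =>
    exp_neg_two_mul_mem_Ioo hη
  exact (contDiffOn_const.mul (h.comp h_exp h_maps)).congr fun η hη => gfun_eq_rlIntegral φ i hη

lemma hasDerivAt_gfun {r : ℝ} (hη : 0 < η)
    (h : HasDerivAt (rlIntegral i 1 (sqDensity φ)) r (Real.exp (-2 * η))) :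
    HasDerivAt (gfun φ i) ((2 ^ i)⁻¹ * (r * (-2 * Real.exp (-2 * η)))) η := by
  have h_exp : HasDerivAt (fun η : ℝ => Real.exp (-2 * η)) (-2 * Real.exp (-2 * η)) η := by
    simpa [mul_comm] using ((hasDerivAt_id' η).const_mul (-2)).exp
  refine ((h.comp η h_exp).const_mul _).congr_of_eventuallyEq ?_
  filter_upwards [Ioi_mem_nhds hη] with ζ hζ using gfun_eq_rlIntegral φ i hζ

lemma hasDerivAt_gfun_of_pos (hφ : ContinuousOn φ (Ioo 0 1))
    (hφ_int : ∀ c ∈ Ioo (0 : ℝ) 1, IntervalIntegrable φ volume c 1) (hi : 0 < i) (hη : 0 < η) :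
    HasDerivAt (gfun φ i) (i * Real.exp (-2 * η) * gfun φ (i - 1) η) η := by
  refine (hasDerivAt_gfun hη (hasDerivAt_rlIntegral
    (contDiffOn_zero.1 (contDiffOn_sqDensity (contDiffOn_zero.2 hφ)))
    (intervalIntegrable_sqDensity hφ_int) hi (exp_neg_two_mul_mem_Ioo hη))).congr_deriv ?_
  rw [gfun_eq_rlIntegral φ (i - 1) hη, Real.rpow_sub_one two_ne_zero]
  field_simp

lemma hasDerivAt_gfun_zero (hφ : ContinuousOn φ (Ioo 0 1))
    (hφ_int : ∀ c ∈ Ioo (0 : ℝ) 1, IntervalIntegrable φ volume c 1) (hη : 0 < η) :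
    HasDerivAt (gfun φ 0) (Real.exp (-η) * φ (Real.exp (-η))) η := by
  refine (hasDerivAt_gfun hη (hasDerivAt_rlIntegral_zero
    (contDiffOn_zero.1 (contDiffOn_sqDensity (contDiffOn_zero.2 hφ)))
    (intervalIntegrable_sqDensity hφ_int) (exp_neg_two_mul_mem_Ioo hη))).congr_deriv ?_
  have h_square : Real.exp (-2 * η) = Real.exp (-η) * Real.exp (-η) := by
    rw [← Real.exp_add]
    ring_nf
  rw [sqDensity, sqrt_exp_neg_two_mul, h_square, Real.rpow_zero]
  field_simp

end SqDensity

theorem stmt11_general {k : ℕ} {φ : ℝ → ℝ} (hφ : ContDiffOn ℝ k φ (Ioo 0 1))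
    (hφ_int : ∀ c ∈ Ioo (0 : ℝ) 1, IntervalIntegrable φ volume c 1) :
    (∀ i : ℝ, 0 ≤ i → ContDiffOn ℝ (k + 1) (gfun φ i) (Ioi 0)) ∧
    (∀ i : ℝ, 0 < i → ∀ η : ℝ, 0 < η →
      HasDerivAt (gfun φ i) (i * Real.exp (-2 * η) * gfun φ (i - 1) η) η) ∧
    (∀ η : ℝ, 0 < η →
      HasDerivAt (gfun φ 0) (Real.exp (-η) * φ (Real.exp (-η))) η) ∧
    (∀ i : ℝ, -1 < i → ContDiffOn ℝ k (gfun φ i) (Ioi 0)) ∧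
    (∀ i : ℝ, -1 < i → i < 0 → ∀ α : ℝ≥0, -i < α → α ≤ 1 → ContDiffHolderOn k α φ (Ioo 0 1) →
      ContDiffOn ℝ (k + 1) (gfun φ i) (Ioi 0)) := by
  have h_smooth := contDiffOn_sqDensity hφ
  have h_int := intervalIntegrable_sqDensity hφ_int
  refine ⟨fun i hi => contDiffOn_gfun (contDiffOn_succ_rlIntegral_of_nonneg h_smooth h_int hi),
    fun i hi η hη => hasDerivAt_gfun_of_pos hφ.continuousOn hφ_int hi hη,
    fun η hη => hasDerivAt_gfun_zero hφ.continuousOn hφ_int hη,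
    fun i hi => contDiffOn_gfun (contDiffOn_rlIntegral_Ioo h_smooth h_int hi),
    fun i hi hi_neg α hα hα_one h => ?_⟩
  have hα_pos : 0 < α := NNReal.coe_pos.1 (by linarith)
  exact contDiffOn_gfun (contDiffOn_succ_rlIntegral_of_contDiffHolderOn
    (contDiffHolderOn_sqDensity hα_pos hα_one h) h_int hα_pos hi (by linarith))

/-- Let `φ : (0,1) → [0,∞)` be `C^k` with
`|(1-ℰ)^k φ^{(k)}(ℰ)| ≤ C(1-ℰ)^{-1+ε}` near `ℰ = 1`. Then: (i) for `i ≥ 0`, `g_i`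
is `C^{k+1}` on `(0,∞)` with `g_i' = i e^{-2η} g_{i-1}` (`i > 0`) and
`g_0'(η) = e^{-η} φ(e^{-η})`; (ii) for `-1 < i < 0`, `g_i` is `C^k`, and `C^{k+1}`
if additionally `ℰ ↦ (1-ℰ)^k φ^{(k)}(ℰ)` is Hölder continuous with exponent
`α > -i`. -/
theorem stmt11
    (k : ℕ) (φ : ℝ → ℝ)
    (hφnonneg : ∀ x ∈ Ioo (0:ℝ) 1, 0 ≤ φ x)
    (hφCk : ContDiffOn ℝ k φ (Ioo 0 1))
    (hφbound : ∃ C > (0:ℝ), ∃ ε > (0:ℝ), ∃ δ ∈ Ioo (0:ℝ) 1,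
      ∀ x ∈ Ioo (1 - δ) 1,
        |(1 - x) ^ k * iteratedDerivWithin k φ (Ioo 0 1) x| ≤ C * (1 - x) ^ (-1 + ε)) :
    (∀ i : ℝ, 0 ≤ i → ContDiffOn ℝ (k + 1) (gfun φ i) (Ioi 0)) ∧
    (∀ i : ℝ, 0 < i → ∀ η : ℝ, 0 < η →
      HasDerivAt (gfun φ i) (i * Real.exp (-2 * η) * gfun φ (i - 1) η) η) ∧
    (∀ η : ℝ, 0 < η →
      HasDerivAt (gfun φ 0) (Real.exp (-η) * φ (Real.exp (-η))) η) ∧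
    (∀ i : ℝ, -1 < i → i < 0 → ContDiffOn ℝ k (gfun φ i) (Ioi 0)) ∧
    (∀ i : ℝ, -1 < i → i < 0 → ∀ α : ℝ, -i < α → ∀ Cα : ℝ,
      (∀ x ∈ Ioo (0:ℝ) 1, ∀ y ∈ Ioo (0:ℝ) 1,
        |(1 - x) ^ k * iteratedDerivWithin k φ (Ioo 0 1) x -
          (1 - y) ^ k * iteratedDerivWithin k φ (Ioo 0 1) y| ≤ Cα * |x - y| ^ α) →
      ContDiffOn ℝ (k + 1) (gfun φ i) (Ioi 0)) := by
  obtain ⟨C, -, ε, hε, δ, hδ, h_bound⟩ := hφbound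
  obtain ⟨h_nonneg, h_deriv, h_deriv_zero, h_neg, h_holder⟩ := stmt11_general hφCk fun c hc =>
    intervalIntegrable_of_abs_pow_mul_iteratedDerivWithin_le hε hδ.1 hφCk h_bound hc
  exact ⟨h_nonneg, h_deriv, h_deriv_zero, fun i hi _ => h_neg i hi,
    fun i hi hi_neg α hα Cα h => h_holder i hi hi_neg _
      ((lt_min hα (by linarith)).trans_le (Real.le_coe_toNNReal _))
      (Real.toNNReal_le_one.2 (min_le_right α 1))
      (.of_abs_mul_iteratedDerivWithin_sub_le isOpen_Ioo (by linarith) (by fun_prop)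
        (fun x hx => pow_ne_zero k (sub_pos.2 hx.2).ne') hφCk h)⟩
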